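/- arXiv:2510.00983 — 2 statements merged into one kernel-verified Lean document; each statement's English description precedes it below -/
import Mathlib

section
/- Let x: ℝ → ℝ^{n+1} and v: ℝ → ℝ^{n+1} be differentiable maps with ‖x(t)‖ = 1 and ⟨v(t), x(t)⟩ = 0 for all t, let κ: ℝ → ℝ be differentiable, and suppose u(t) := κ(t)·v(t) ≠ 0 for all t. Then the curve f(t) := exp_{x(t)}(u(t)) is differentiable and for every t, f'(t) = D₁(w(t)) + D₂(x'(t)), where w := κ'·v + κ·(v' + ⟨v, x'⟩·x), D₁(w) := (⟨u,w⟩/‖u‖²)·u·cos‖u‖ + (sin‖u‖/‖u‖)·(w − (⟨u,w⟩/‖u‖²)·u − ⟨u,w⟩·x), and D₂(ẋ) := ẋ·cos‖u‖ − (sin‖u‖/‖u‖)·⟨u,ẋ⟩·x. (This is the continuous-time Riemannian consistency decomposition ḟ = d(exp_x)_u(κ̇v + κ∇_ẋv) + d(exp u)_x(ẋ) instantiated on the sphere Sⁿ, where ∇_ẋv = v̇ + ⟨v,ẋ⟩x is the spherical covariant derivative.) -/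
open scoped RealInnerProductSpace

/-!
For fixed `p`, the map `D₁` is the ordinary derivative of `u ↦ exp_p u` in the ambient space, so
differentiating along `(x, u)` gives `cos ‖u‖ • x' + D₁ u'`. Since `D₁` is linear and sends `x ⟂ u`
to `(sin ‖u‖ / ‖u‖) • x`, replacing `u'` by the covariant derivative `u' + ⟪u, x'⟫ • x` adds the
normal term `(sin ‖u‖ / ‖u‖ * ⟪u, x'⟫) • x`, and this is what `D₂ x'` subtracts from
`cos ‖u‖ • x'`.
-/

section

variable {E : Type*} [NormedAddCommGroup E] [InnerProductSpace ℝ E]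

/-- The exponential map `exp_p u` of the unit sphere, as a function on the ambient space. At `u = 0`
the convention `0 / 0 = 0` still gives the correct value `p`. -/
noncomputable def sphereExp (p u : E) : E :=
  Real.cos ‖u‖ • p + (Real.sin ‖u‖ / ‖u‖) • u

/-- The differential `D₁ = d(exp_p)_u` of the spherical exponential map in the direction `w`, for
`u ≠ 0`. -/
noncomputable def sphereExpFiberDeriv (p u w : E) : E :=
  ((⟪u, w⟫ / ‖u‖ ^ 2) * Real.cos ‖u‖) • u
    + (Real.sin ‖u‖ / ‖u‖) • (w - (⟪u, w⟫ / ‖u‖ ^ 2) • u - ⟪u, w⟫ • p)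

/-- The differential `D₂ = d(exp u)_p` of the spherical exponential map in the base point: the
velocity of `exp_p u` when `p` moves with velocity `p'` and `u` is parallel along it. -/
noncomputable def sphereExpBaseDeriv (p u p' : E) : E :=
  Real.cos ‖u‖ • p' - ((Real.sin ‖u‖ / ‖u‖) * ⟪u, p'⟫) • p

/-- The covariant derivative on the unit sphere of a tangent field along a curve, where `p`, `p'`
are the position and velocity of the curve and `v`, `v'` the value and ambient derivative of the
field. -/
noncomputable def sphereCovDeriv (p p' v v' : E) : E :=
  v' + ⟪v, p'⟫ • p

theorem sphereCovDeriv_smul (p p' v v' : E) (k k' : ℝ) :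
    sphereCovDeriv p p' (k • v) (k • v' + k' • v) = k' • v + k • sphereCovDeriv p p' v v' := by
  simp only [sphereCovDeriv, real_inner_smul_left]
  module

theorem sphereExpFiberDeriv_add_smul_base {p u : E} (hup : ⟪u, p⟫ = 0) (w : E) (c : ℝ) :
    sphereExpFiberDeriv p u (w + c • p)
      = sphereExpFiberDeriv p u w + (Real.sin ‖u‖ / ‖u‖ * c) • p := by
  have inner_eq : ⟪u, w + c • p⟫ = ⟪u, w⟫ := by
    rw [inner_add_right, real_inner_smul_right, hup, mul_zero, add_zero]
  simp only [sphereExpFiberDeriv, inner_eq]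
  module

theorem cos_smul_add_sphereExpFiberDeriv {p u : E} (hup : ⟪u, p⟫ = 0) (p' u' : E) :
    Real.cos ‖u‖ • p' + sphereExpFiberDeriv p u u'
      = sphereExpFiberDeriv p u (sphereCovDeriv p p' u u') + sphereExpBaseDeriv p u p' := by
  rw [sphereCovDeriv, sphereExpFiberDeriv_add_smul_base hup, sphereExpBaseDeriv]
  abel

variable {x u v : ℝ → E} {x' u' v' : E} {κ : ℝ → ℝ} {κ' t : ℝ}

theorem hasDerivAt_norm_of_ne_zero (hu : HasDerivAt u u' t) (hne : u t ≠ 0) :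
    HasDerivAt (fun s => ‖u s‖) (⟪u t, u'⟫ / ‖u t‖) t := by
  have hsqrt := hu.norm_sq.sqrt (pow_ne_zero 2 (norm_ne_zero_iff.mpr hne))
  simp only [Real.sqrt_sq (norm_nonneg _)] at hsqrt
  exact hsqrt.congr_deriv (mul_div_mul_left _ _ two_ne_zero)

theorem hasDerivAt_cos_norm (hu : HasDerivAt u u' t) (hne : u t ≠ 0) :
    HasDerivAt (fun s => Real.cos ‖u s‖) (-(Real.sin ‖u t‖ / ‖u t‖ * ⟪u t, u'⟫)) t :=
  (hasDerivAt_norm_of_ne_zero hu hne).cos.congr_deriv (by ring)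

theorem hasDerivAt_sin_norm_div_norm (hu : HasDerivAt u u' t) (hne : u t ≠ 0) :
    HasDerivAt (fun s => Real.sin ‖u s‖ / ‖u s‖)
      (⟪u t, u'⟫ / ‖u t‖ ^ 2 * (Real.cos ‖u t‖ - Real.sin ‖u t‖ / ‖u t‖)) t := by
  have hnorm := hasDerivAt_norm_of_ne_zero hu hne
  have hnorm_ne : ‖u t‖ ≠ 0 := norm_ne_zero_iff.mpr hne
  refine (hnorm.sin.div hnorm hnorm_ne).congr_deriv ?_
  field_simp

theorem hasDerivAt_sphereExp (hx : HasDerivAt x x' t) (hu : HasDerivAt u u' t) (hne : u t ≠ 0) :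
    HasDerivAt (fun s => sphereExp (x s) (u s))
      (Real.cos ‖u t‖ • x' + sphereExpFiberDeriv (x t) (u t) u') t := by
  have hcos := (hasDerivAt_cos_norm hu hne).smul hx
  have hsin := (hasDerivAt_sin_norm_div_norm hu hne).smul hu
  refine (hcos.add hsin).congr_deriv ?_
  rw [sphereExpFiberDeriv]
  module

theorem hasDerivAt_sphereExp_of_inner_eq_zero (hx : HasDerivAt x x' t) (hu : HasDerivAt u u' t)
    (hux : ⟪u t, x t⟫ = 0) (hne : u t ≠ 0) :
    HasDerivAt (fun s => sphereExp (x s) (u s))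
      (sphereExpFiberDeriv (x t) (u t) (sphereCovDeriv (x t) x' (u t) u')
        + sphereExpBaseDeriv (x t) (u t) x') t :=
  (hasDerivAt_sphereExp hx hu hne).congr_deriv (cos_smul_add_sphereExpFiberDeriv hux x' u')

theorem riemannian_consistency_decomposition_sphere_general (hx : HasDerivAt x x' t)
    (hv : HasDerivAt v v' t) (hκ : HasDerivAt κ κ' t) (hvx : ⟪v t, x t⟫ = 0)
    (hu : κ t • v t ≠ 0) :
    HasDerivAt (fun s => sphereExp (x s) (κ s • v s))
      (sphereExpFiberDeriv (x t) (κ t • v t) (κ' • v t + κ t • sphereCovDeriv (x t) x' (v t) v')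
        + sphereExpBaseDeriv (x t) (κ t • v t) x') t := by
  have hux : ⟪κ t • v t, x t⟫ = 0 := by rw [real_inner_smul_left, hvx, mul_zero]
  rw [← sphereCovDeriv_smul]
  exact hasDerivAt_sphereExp_of_inner_eq_zero hx (hκ.smul hv) hux hu

end

/-- On the sphere `Sⁿ ⊆ ℝ^{n+1}`, for a curve `x` with `‖x t‖ = 1`, a tangent
field `v` with `⟨v t, x t⟩ = 0`, a scheduler `κ`, and `u t := κ t • v t ≠ 0`, the curve
`f t := exp_{x t}(u t) = cos‖u‖ • x + (sin‖u‖/‖u‖) • u` is differentiable with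
`f' t = d(exp_x)_u(w) + d(exp u)_x(x')` where `w = κ'•v + κ•(v' + ⟨v,x'⟩•x)` is
`κ̇v + κ∇_ẋv` (spherical covariant derivative). -/
theorem riemannian_consistency_decomposition_sphere {n : ℕ}
    (x v x' v' : ℝ → EuclideanSpace ℝ (Fin (n + 1)))
    (κ κ' : ℝ → ℝ)
    (hx : ∀ t, HasDerivAt x (x' t) t)
    (hv : ∀ t, HasDerivAt v (v' t) t)
    (hκ : ∀ t, HasDerivAt κ (κ' t) t)
    (hxnorm : ∀ t, ‖x t‖ = 1)
    (hvx : ∀ t, ⟪v t, x t⟫ = 0)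
    (hu : ∀ t, κ t • v t ≠ 0) :
    ∀ t : ℝ,
      HasDerivAt
        (fun s => Real.cos ‖κ s • v s‖ • x s
          + (Real.sin ‖κ s • v s‖ / ‖κ s • v s‖) • (κ s • v s))
        -- D₁(w t):
        (((⟪κ t • v t, κ' t • v t + κ t • (v' t + ⟪v t, x' t⟫ • x t)⟫ / ‖κ t • v t‖ ^ 2)
              * Real.cos ‖κ t • v t‖) • (κ t • v t)
          + (Real.sin ‖κ t • v t‖ / ‖κ t • v t‖) •
              ((κ' t • v t + κ t • (v' t + ⟪v t, x' t⟫ • x t))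
                - (⟪κ t • v t, κ' t • v t + κ t • (v' t + ⟪v t, x' t⟫ • x t)⟫
                    / ‖κ t • v t‖ ^ 2) • (κ t • v t)
                - ⟪κ t • v t, κ' t • v t + κ t • (v' t + ⟪v t, x' t⟫ • x t)⟫ • x t)
        -- + D₂(x' t):
          + (Real.cos ‖κ t • v t‖ • x' t
              - ((Real.sin ‖κ t • v t‖ / ‖κ t • v t‖) * ⟪κ t • v t, x' t⟫) • x t)) t :=
  fun t => riemannian_consistency_decomposition_sphere_general (hx t) (hv t) (hκ t) (hvx t) (hu t)
end

section
/- For every nonzero u ∈ ℝ³ with r := ‖u‖, the left Jacobian series of SO(3) converges and has the closed form J_L(u) = Σ_{n=0}^∞ û^n/(n+1)! = I + ((1 − cos(r))/r²)·û + ((r − sin(r))/r³)·û². -/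
/-!
By the vector triple product expansion, `û³ = -‖u‖² û`, so the powers of `û` reduce to multiples of
`1`, `û` and `û²`. Collecting the odd and the even powers of the series leaves, as coefficients of
`û` and `û²`, the tails of the power series of `cos r` and `sin r` divided by `-r²` and `-r³`.
-/

open Matrix

/-- The hat matrix of `u ∈ ℝ³`: the skew-symmetric matrix with `hat u *ᵥ v = u ×₃ v`. -/
def hat (u : Fin 3 → ℝ) : Matrix (Fin 3) (Fin 3) ℝ :=
  !![0, -u 2, u 1; u 2, 0, -u 0; -u 1, u 0, 0]

section Powers

variable {R A : Type*} [Monoid R] [Monoid A] [MulAction R A] [IsScalarTower R A A]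
  {c : R} {x : A}

lemma pow_two_mul_add_one_of_pow_three_eq_smul (hx : x ^ 3 = c • x) (m : ℕ) :
    x ^ (2 * m + 1) = c ^ m • x := by
  induction m with
  | zero => simp
  | succ m ih =>
    calc x ^ (2 * (m + 1) + 1) = x ^ (2 * m + 1) * x ^ 2 := by
          rw [← pow_add, mul_add_one, add_right_comm]
      _ = c ^ m • x ^ 3 := by rw [ih, smul_mul_assoc, ← pow_succ']
      _ = c ^ (m + 1) • x := by rw [hx, smul_smul, ← pow_succ]

lemma pow_two_mul_add_two_of_pow_three_eq_smul (hx : x ^ 3 = c • x) (m : ℕ) :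
    x ^ (2 * m + 2) = c ^ m • x ^ 2 := by
  rw [pow_succ, pow_two_mul_add_one_of_pow_three_eq_smul hx, smul_mul_assoc, ← sq]

end Powers

lemma hasSum_smul_pow_of_pow_three_eq_smul {R A : Type*} [Semiring R] [Semiring A] [Module R A]
    [IsScalarTower R A A] [TopologicalSpace R] [TopologicalSpace A] [ContinuousAdd A]
    [ContinuousSMul R A] {a : ℕ → R} {c s t : R} {x : A} (hx : x ^ 3 = c • x)
    (hs : HasSum (fun m ↦ a (2 * m + 1) * c ^ m) s)
    (ht : HasSum (fun m ↦ a (2 * m + 2) * c ^ m) t) :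
    HasSum (fun n ↦ a n • x ^ n) (a 0 • 1 + s • x + t • x ^ 2) := by
  have odd_powers : HasSum (fun m ↦ a (2 * m + 1) • x ^ (2 * m + 1)) (s • x) := by
    simpa only [pow_two_mul_add_one_of_pow_three_eq_smul hx, smul_smul] using hs.smul_const x
  have even_powers : HasSum (fun m ↦ a (2 * m + 2) • x ^ (2 * m + 2)) (t • x ^ 2) := by
    simpa only [pow_two_mul_add_two_of_pow_three_eq_smul hx, smul_smul] using
      ht.smul_const (x ^ 2)
  have positive_powers : HasSum (fun n ↦ a (n + 1) • x ^ (n + 1)) (s • x + t • x ^ 2) :=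
    HasSum.even_add_odd (f := fun n ↦ a (n + 1) • x ^ (n + 1)) odd_powers even_powers
  simpa only [pow_zero, add_assoc] using
    HasSum.zero_add (f := fun n ↦ a n • x ^ n) positive_powers

section TrigonometricTails

variable {r : ℝ}

lemma hasSum_one_sub_cos_div_sq (hr : r ≠ 0) :
    HasSum (fun m : ℕ ↦ ((2 * m + 2).factorial : ℝ)⁻¹ * (-r ^ 2) ^ m)
      ((1 - Real.cos r) / r ^ 2) := by
  have tail : HasSum (fun m : ℕ ↦ (-1) ^ (m + 1) * r ^ (2 * m + 2) / (2 * m + 2).factorial)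
      (Real.cos r - 1) := by
    simpa [mul_add] using (hasSum_nat_add_iff' 1).mpr (Real.hasSum_cos r)
  have term_eq (m : ℕ) : (-1) ^ (m + 1) * r ^ (2 * m + 2) / (2 * m + 2).factorial / -r ^ 2 =
      ((2 * m + 2).factorial : ℝ)⁻¹ * (-r ^ 2) ^ m := by
    rw [neg_pow (r ^ 2)]
    field_simp
    ring
  have sum_eq : (Real.cos r - 1) / -r ^ 2 = (1 - Real.cos r) / r ^ 2 := by
    rw [div_neg, ← neg_div, neg_sub]
  rw [← funext term_eq, ← sum_eq]
  exact tail.div_const (-r ^ 2)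

lemma hasSum_sub_sin_div_pow_three (hr : r ≠ 0) :
    HasSum (fun m : ℕ ↦ ((2 * m + 3).factorial : ℝ)⁻¹ * (-r ^ 2) ^ m)
      ((r - Real.sin r) / r ^ 3) := by
  have tail : HasSum (fun m : ℕ ↦ (-1) ^ (m + 1) * r ^ (2 * m + 3) / (2 * m + 3).factorial)
      (Real.sin r - r) := by
    simpa [mul_add] using (hasSum_nat_add_iff' 1).mpr (Real.hasSum_sin r)
  have term_eq (m : ℕ) : (-1) ^ (m + 1) * r ^ (2 * m + 3) / (2 * m + 3).factorial / -r ^ 3 =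
      ((2 * m + 3).factorial : ℝ)⁻¹ * (-r ^ 2) ^ m := by
    rw [neg_pow (r ^ 2)]
    field_simp
    ring
  have sum_eq : (Real.sin r - r) / -r ^ 3 = (r - Real.sin r) / r ^ 3 := by
    rw [div_neg, ← neg_div, neg_sub]
  rw [← funext term_eq, ← sum_eq]
  exact tail.div_const (-r ^ 3)

end TrigonometricTails

lemma hasSum_inv_factorial_succ_smul_pow {A : Type*} [Semiring A] [Module ℝ A]
    [IsScalarTower ℝ A A] [TopologicalSpace A] [ContinuousAdd A] [ContinuousSMul ℝ A]
    {x : A} {r : ℝ} (hr : r ≠ 0) (hx : x ^ 3 = (-r ^ 2) • x) :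
    HasSum (fun n : ℕ ↦ ((n + 1).factorial : ℝ)⁻¹ • x ^ n)
      (1 + ((1 - Real.cos r) / r ^ 2) • x + ((r - Real.sin r) / r ^ 3) • x ^ 2) := by
  simpa using hasSum_smul_pow_of_pow_three_eq_smul (a := fun n ↦ ((n + 1).factorial : ℝ)⁻¹) hx
    (hasSum_one_sub_cos_div_sq hr) (hasSum_sub_sin_div_pow_three hr)

lemma hat_mulVec (u v : Fin 3 → ℝ) : hat u *ᵥ v = u ⨯₃ v := by
  ext i
  rw [mulVec, vec3_dotProduct]
  fin_cases i <;> simp [hat, cross_apply] <;> ring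

lemma cross_cross_cross_self {R : Type*} [CommRing R] (u v : Fin 3 → R) :
    u ⨯₃ (u ⨯₃ (u ⨯₃ v)) = -(u ⬝ᵥ u) • u ⨯₃ v := by
  rw [cross_cross_eq_smul_sub_smul', dot_self_cross, zero_smul, zero_sub, neg_smul]

lemma hat_pow_three (u : Fin 3 → ℝ) : hat u ^ 3 = -(u ⬝ᵥ u) • hat u := by
  refine ext_iff_mulVec.mpr fun v ↦ ?_
  simp only [pow_succ', pow_zero, mul_one, ← mulVec_mulVec, smul_mulVec, hat_mulVec,
    cross_cross_cross_self]

/-- The left Jacobian series of SO(3), `J_L(u) = Σ_{n≥0} ûⁿ/(n+1)!`,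
converges, with closed form `I + ((1 − cos r)/r²)·û + ((r − sin r)/r³)·û²` for
nonzero `u` with Euclidean norm `r`. -/
theorem so3_left_jacobian_closed_form (u : Fin 3 → ℝ) (hu : u ≠ 0) (r : ℝ)
    (hr : r = Real.sqrt (u 0 ^ 2 + u 1 ^ 2 + u 2 ^ 2)) :
    HasSum (fun k : ℕ => ((Nat.factorial (k + 1) : ℝ))⁻¹ • hat u ^ k)
      (1 + ((1 - Real.cos r) / r ^ 2) • hat u + ((r - Real.sin r) / r ^ 3) • hat u ^ 2) := by
  have hr_sq : r ^ 2 = u ⬝ᵥ u := by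
    rw [hr, Real.sq_sqrt (by positivity), vec3_dotProduct]
    ring
  have hr_ne : r ≠ 0 := by
    rwa [← pow_ne_zero_iff two_ne_zero, hr_sq, Ne, dotProduct_self_eq_zero]
  have hat_cube : hat u ^ 3 = (-r ^ 2) • hat u := by rw [hat_pow_three, hr_sq]
  exact hasSum_inv_factorial_succ_smul_pow hr_ne hat_cube
end
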